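/- (Local–global principle.) Let r ≥ 1, let M be a real symmetric r×r matrix whose off-diagonal entries are nonnegative, and let h ∈ ℝ^r be a nonnegative vector. Suppose that for each index i ∈ supp(M) there are given a real symmetric r×r matrix M⟨i⟩ and a linear map T⟨i⟩ : ℝ^r → ℝ^r such that: (Inh) (M v)_i = ⟨T⟨i⟩ v, M⟨i⟩ T⟨i⟩ h⟩ for every i ∈ supp(M) and every v ∈ ℝ^r; (Pull) Σ_{i ∈ supp(M)} h_i ⟨T⟨i⟩ v, M⟨i⟩ T⟨i⟩ v⟩ ≥ ⟨v, M v⟩ for every v ∈ ℝ^r; (Irr) for every nonempty proper subset S ⊊ supp(M) there exist i ∈ S and j ∈ supp(M) \ S with M_{ij} ≠ 0; (h-Pos) h_i > 0 and (M h)_i > 0 for every i ∈ supp(M); and each matrix M⟨i⟩ with i ∈ supp(M) satisfies (Hyp). Then M satisfies (Hyp). -/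

import Mathlib

open Matrix

/-- A real symmetric `r × r` matrix `M` satisfies (Hyp) if for all `v, w ∈ ℝ^r` with
`⟨w, M w⟩ > 0` one has `⟨v, M w⟩² ≥ ⟨v, M v⟩ · ⟨w, M w⟩`. -/
def SatisfiesHyp {r : ℕ} (M : Matrix (Fin r) (Fin r) ℝ) : Prop :=
  ∀ v w : Fin r → ℝ, 0 < w ⬝ᵥ M.mulVec w →
    (v ⬝ᵥ M.mulVec w) ^ 2 ≥ (v ⬝ᵥ M.mulVec v) * (w ⬝ᵥ M.mulVec w)

open scoped Classical in
/-- The support of a matrix: the set of indices whose row is nonzero. -/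
noncomputable def matrixSupp {r : ℕ} (M : Matrix (Fin r) (Fin r) ℝ) : Finset (Fin r) :=
  Finset.univ.filter fun i => M i ≠ 0

/-!
Let `D` be the diagonal matrix with entries `(M h)ᵢ / hᵢ`, so that `D h = M h`. In the ground state
coordinates `xᵢ / hᵢ` the form of `D - M` is a sum of squares weighted by the off-diagonal entries
of `M`. Hence `D - M` is positive semidefinite and irreducibility pins down its kernel: this is the
Perron–Frobenius input. The inheritance identity and (Hyp) for the local matrices turn the pullback
inequality into `M ≤ M D⁻¹ M`, which says that no eigenvalue of `D⁻¹ M` lies strictly between `0`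
and `1`. So `1` is the only positive eigenvalue and it is simple, i.e. `M` is nonpositive on the
orthogonal complement of `M h`. For `v ⟂ M h`, a solution `u` of `(D - M) u = D v` proves this
without the spectral theorem.
-/

section Field

variable {K m n : Type*} [Field K] [Fintype m] [Fintype n]

lemma exists_mulVec_eq_of_forall_dotProduct_eq_zero (A : Matrix m n K) {y : m → K}
    (hy : ∀ x, x ᵥ* A = 0 → x ⬝ᵥ y = 0) : ∃ u, A *ᵥ u = y := by
  classical
  let B : (m → K) →ₗ[K] (n → K) →ₗ[K] K := toLinearMap₂' K A
  have hB (x w) : B x w = x ⬝ᵥ A *ᵥ w := toLinearMap₂'_apply' A x w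
  have hmem : dotProductEquiv K m y ∈ B.ker.dualAnnihilator := by
    refine (Submodule.mem_dualAnnihilator _).2 fun x hx => ?_
    rw [dotProductEquiv_apply_apply, dotProduct_comm]
    refine hy x (dotProduct_eq_zero _ fun w => ?_)
    rw [← dotProduct_mulVec, ← hB, LinearMap.mem_ker.1 hx, LinearMap.zero_apply]
  rw [LinearMap.dualAnnihilator_ker_eq_range_flip] at hmem
  obtain ⟨u, hu⟩ := hmem
  refine ⟨u, dotProduct_eq _ _ fun x => ?_⟩
  rw [dotProduct_comm, ← hB]
  exact LinearMap.congr_fun hu x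

end Field

section CommSemiring

variable {R n : Type*} [CommSemiring R] [Fintype n]

lemma dotProduct_mulVec_comm_of_isSymm {M : Matrix n n R} (hM : M.IsSymm) (x y : n → R) :
    x ⬝ᵥ M *ᵥ y = y ⬝ᵥ M *ᵥ x := by
  rw [← dotProduct_transpose_mulVec, hM.eq]

end CommSemiring

variable {K n : Type*} [Fintype n]

section QuadraticForm

variable [Field K] [LinearOrder K] [IsStrictOrderedRing K]

/-- Property (Hyp) over an ordered field and an arbitrary finite index type: the quadratic form of
`M` satisfies the reverse Cauchy–Schwarz inequality. -/
def ReverseCauchySchwarz (M : Matrix n n K) : Prop :=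
  ∀ v w : n → K, 0 < w ⬝ᵥ M *ᵥ w → (v ⬝ᵥ M *ᵥ v) * (w ⬝ᵥ M *ᵥ w) ≤ (v ⬝ᵥ M *ᵥ w) ^ 2

lemma reverseCauchySchwarz_of_nonpos_of_dotProduct_eq_zero {M : Matrix n n K} (hM : M.IsSymm)
    (a : n → K) (ha : ∀ v, v ⬝ᵥ a = 0 → v ⬝ᵥ M *ᵥ v ≤ 0) : ReverseCauchySchwarz M := by
  intro v w hw
  have hwa : w ⬝ᵥ a ≠ 0 := fun h0 => (ha w h0).not_gt hw
  set t := (v ⬝ᵥ a) / (w ⬝ᵥ a) with ht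
  have horth : (v - t • w) ⬝ᵥ a = 0 := by
    rw [sub_dotProduct, smul_dotProduct, ht, smul_eq_mul, div_mul_cancel₀ _ hwa, sub_self]
  have hexpand : (v - t • w) ⬝ᵥ M *ᵥ (v - t • w)
      = v ⬝ᵥ M *ᵥ v - 2 * t * (v ⬝ᵥ M *ᵥ w) + t ^ 2 * (w ⬝ᵥ M *ᵥ w) := by
    simp only [mulVec_sub, mulVec_smul, sub_dotProduct, dotProduct_sub, smul_dotProduct,
      dotProduct_smul, smul_eq_mul, dotProduct_mulVec_comm_of_isSymm hM w v]
    ring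
  have hnonpos := hexpand ▸ ha _ horth
  calc (v ⬝ᵥ M *ᵥ v) * (w ⬝ᵥ M *ᵥ w)
      ≤ (v ⬝ᵥ M *ᵥ w) ^ 2 - (v ⬝ᵥ M *ᵥ w - t * (w ⬝ᵥ M *ᵥ w)) ^ 2 := by
        linarith [mul_nonpos_of_nonpos_of_nonneg hnonpos hw.le]
    _ ≤ (v ⬝ᵥ M *ᵥ w) ^ 2 := sub_le_self _ (sq_nonneg _)

lemma dotProduct_mulVec_nonpos_of_sub_mulVec_eq {D M : Matrix n n K} (hM : M.IsSymm)
    (hMD : ∀ w, 0 ≤ w ⬝ᵥ (D - M) *ᵥ w)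
    (hsolve : ∀ u w, M *ᵥ u = D *ᵥ w → u ⬝ᵥ M *ᵥ u ≤ w ⬝ᵥ D *ᵥ w)
    {u v : n → K} (huv : (D - M) *ᵥ u = D *ᵥ v) : v ⬝ᵥ M *ᵥ v ≤ 0 := by
  obtain ⟨w, rfl⟩ : ∃ w, v = u - w := ⟨u - v, (sub_sub_cancel u v).symm⟩
  have hMu : M *ᵥ u = D *ᵥ w := by
    rwa [sub_mulVec, mulVec_sub, sub_right_inj] at huv
  have hMDw : w ⬝ᵥ M *ᵥ w ≤ w ⬝ᵥ D *ᵥ w := by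
    simpa only [sub_mulVec, dotProduct_sub, sub_nonneg] using hMD w
  calc (u - w) ⬝ᵥ M *ᵥ (u - w)
      = u ⬝ᵥ M *ᵥ u - 2 * (w ⬝ᵥ M *ᵥ u) + w ⬝ᵥ M *ᵥ w := by
        simp only [mulVec_sub, sub_dotProduct, dotProduct_sub,
          dotProduct_mulVec_comm_of_isSymm hM u w]
        ring
    _ = u ⬝ᵥ M *ᵥ u - 2 * (w ⬝ᵥ D *ᵥ w) + w ⬝ᵥ M *ᵥ w := by rw [hMu]
    _ ≤ 0 := by linarith [hsolve u w hMu]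

end QuadraticForm

section Support

section Zero

variable [Zero K]

open scoped Classical in
/-- The support of a matrix with arbitrary entries and finite index type: the indices of its nonzero
rows. -/
noncomputable def rowSupport (M : Matrix n n K) : Finset n :=
  Finset.univ.filter fun i => M i ≠ 0

lemma mem_rowSupport {M : Matrix n n K} {i : n} : i ∈ rowSupport M ↔ M i ≠ 0 := by
  simp [rowSupport]

lemma mem_rowSupport_of_apply_ne_zero {M : Matrix n n K} {i j : n} (hij : M i j ≠ 0) :
    i ∈ rowSupport M :=
  mem_rowSupport.2 fun hi => hij (congrFun hi j)

/-- Irreducibility of `M` on its support: the graph of nonzero entries of `M` is connected there. -/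
def IsIrreducibleOnSupport [DecidableEq n] (M : Matrix n n K) : Prop :=
  ∀ S : Finset n, S.Nonempty → S ⊂ rowSupport M → ∃ i ∈ S, ∃ j ∈ rowSupport M \ S, M i j ≠ 0

lemma IsIrreducibleOnSupport.exists_forall_eq [DecidableEq n] {M : Matrix n n K}
    {α : Type*} [Nonempty α] (hirr : IsIrreducibleOnSupport M) {y : n → α}
    (hy : ∀ i j, M i j ≠ 0 → y i = y j) : ∃ c, ∀ i ∈ rowSupport M, y i = c := by
  classical
  obtain hempty | ⟨i₀, hi₀⟩ := (rowSupport M).eq_empty_or_nonempty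
  · exact ⟨Classical.arbitrary α, by simp [hempty]⟩
  refine ⟨y i₀, ?_⟩
  by_contra! ⟨k, hk, hki₀⟩
  obtain ⟨i, hi, j, hj, hij⟩ := hirr {i ∈ rowSupport M | y i = y i₀}
    ⟨i₀, Finset.mem_filter.2 ⟨hi₀, rfl⟩⟩ (Finset.filter_ssubset.2 ⟨k, hk, hki₀⟩)
  obtain ⟨hjS, hj⟩ := Finset.mem_sdiff.1 hj
  exact hj (Finset.mem_filter.2 ⟨hjS, (hy i j hij).symm.trans (Finset.mem_filter.1 hi).2⟩)

end Zero

lemma mulVec_apply_eq_zero_of_notMem_rowSupport [NonUnitalNonAssocSemiring K] {M : Matrix n n K}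
    {i : n} (hi : i ∉ rowSupport M) (x : n → K) : (M *ᵥ x) i = 0 :=
  Finset.sum_eq_zero fun _ _ =>
    mul_eq_zero_of_left (not_imp_comm.1 mem_rowSupport_of_apply_ne_zero hi) _

end Support

section GroundDiagonal

variable [DecidableEq n] [Field K] {M : Matrix n n K} {h : n → K}

/-- The diagonal matrix `D` with `D h = M h`, for `h` nonvanishing on the support of `M`. Its
entries outside the support are `0`, whatever `h` is there. -/
noncomputable def groundDiagonal (M : Matrix n n K) (h : n → K) : Matrix n n K :=
  diagonal (M *ᵥ h / h)

lemma groundDiagonal_mulVec_apply (M : Matrix n n K) (h x : n → K) (i : n) :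
    (groundDiagonal M h *ᵥ x) i = (M *ᵥ h) i / h i * x i :=
  mulVec_diagonal _ _ _

lemma isSymm_groundDiagonal_sub (hM : M.IsSymm) : (groundDiagonal M h - M).IsSymm :=
  (isSymm_diagonal _).sub hM

lemma two_mul_dotProduct_groundDiagonal_sub_mulVec (hM : M.IsSymm)
    (hne : ∀ i ∈ rowSupport M, h i ≠ 0) (x : n → K) :
    2 * (x ⬝ᵥ (groundDiagonal M h - M) *ᵥ x)
      = ∑ i, ∑ j, M i j * (h i * h j) * (x i / h i - x j / h j) ^ 2 := by
  have hdiag : x ⬝ᵥ groundDiagonal M h *ᵥ x = ∑ i, ∑ j, M i j * (h j * x i ^ 2 / h i) := by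
    refine Finset.sum_congr rfl fun i _ => ?_
    rw [groundDiagonal_mulVec_apply, mulVec, dotProduct, Finset.sum_div, Finset.sum_mul,
      Finset.mul_sum]
    exact Finset.sum_congr rfl fun j _ => by ring
  have hdiag_swap : x ⬝ᵥ groundDiagonal M h *ᵥ x = ∑ i, ∑ j, M i j * (h i * x j ^ 2 / h j) := by
    rw [hdiag, Finset.sum_comm]
    simp only [hM.apply]
  have hoff : x ⬝ᵥ M *ᵥ x = ∑ i, ∑ j, M i j * (x i * x j) := by
    simp only [mulVec, dotProduct, Finset.mul_sum, mul_left_comm (x _)]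
  calc 2 * (x ⬝ᵥ (groundDiagonal M h - M) *ᵥ x)
      = x ⬝ᵥ groundDiagonal M h *ᵥ x + x ⬝ᵥ groundDiagonal M h *ᵥ x - 2 * (x ⬝ᵥ M *ᵥ x) := by
        rw [sub_mulVec, dotProduct_sub]; ring
    _ = ∑ i, ∑ j, (M i j * (h j * x i ^ 2 / h i) + M i j * (h i * x j ^ 2 / h j)
          - 2 * (M i j * (x i * x j))) := by
        nth_rw 1 [hdiag]
        rw [hdiag_swap, hoff]
        simp only [Finset.mul_sum, Finset.sum_add_distrib, Finset.sum_sub_distrib]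
    _ = ∑ i, ∑ j, M i j * (h i * h j) * (x i / h i - x j / h j) ^ 2 := by
        refine Finset.sum_congr rfl fun i _ => Finset.sum_congr rfl fun j _ => ?_
        by_cases hij : M i j = 0
        · simp [hij]
        have hi : h i ≠ 0 := hne i (mem_rowSupport_of_apply_ne_zero hij)
        have hj : h j ≠ 0 := hne j (mem_rowSupport_of_apply_ne_zero (by rwa [hM.apply]))
        field_simp
        ring

lemma sum_mul_groundDiagonal_mulVec_sq_div
    (hne : ∀ i ∈ rowSupport M, h i ≠ 0 ∧ (M *ᵥ h) i ≠ 0) (w : n → K) :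
    ∑ i ∈ rowSupport M, h i * ((groundDiagonal M h *ᵥ w) i ^ 2 / (M *ᵥ h) i)
      = w ⬝ᵥ groundDiagonal M h *ᵥ w := by
  calc ∑ i ∈ rowSupport M, h i * ((groundDiagonal M h *ᵥ w) i ^ 2 / (M *ᵥ h) i)
      = ∑ i ∈ rowSupport M, w i * (groundDiagonal M h *ᵥ w) i := by
        refine Finset.sum_congr rfl fun i hi => ?_
        obtain ⟨hhi, hMhi⟩ := hne i hi
        rw [groundDiagonal_mulVec_apply]
        field_simp
    _ = w ⬝ᵥ groundDiagonal M h *ᵥ w := by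
        refine Finset.sum_subset (Finset.subset_univ _) fun i _ hi => ?_
        rw [groundDiagonal_mulVec_apply, mulVec_apply_eq_zero_of_notMem_rowSupport hi, zero_div,
          zero_mul, mul_zero]

end GroundDiagonal

section GroundState

variable [Field K] [LinearOrder K] [IsStrictOrderedRing K] {M : Matrix n n K} {h : n → K}

lemma apply_mul_mul_mul_sq_sub_nonneg (hM : M.IsSymm) (hoff : ∀ i j, i ≠ j → 0 ≤ M i j)
    (hpos : ∀ i ∈ rowSupport M, 0 < h i) (y : n → K) (i j : n) :
    0 ≤ M i j * (h i * h j) * (y i - y j) ^ 2 := by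
  by_cases hij : M i j = 0
  · simp [hij]
  obtain rfl | hne := eq_or_ne i j
  · simp
  have hi := hpos i (mem_rowSupport_of_apply_ne_zero hij)
  have hj := hpos j (mem_rowSupport_of_apply_ne_zero (by rwa [hM.apply]))
  have := hoff i j hne
  positivity

variable [DecidableEq n]

lemma dotProduct_groundDiagonal_sub_mulVec_nonneg (hM : M.IsSymm)
    (hoff : ∀ i j, i ≠ j → 0 ≤ M i j) (hpos : ∀ i ∈ rowSupport M, 0 < h i) (x : n → K) :
    0 ≤ x ⬝ᵥ (groundDiagonal M h - M) *ᵥ x := by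
  rw [← mul_nonneg_iff_of_pos_left two_pos,
    two_mul_dotProduct_groundDiagonal_sub_mulVec hM fun i hi => (hpos i hi).ne']
  exact Finset.sum_nonneg fun i _ => Finset.sum_nonneg fun j _ =>
    apply_mul_mul_mul_sq_sub_nonneg hM hoff hpos (x / h) i j

lemma div_eq_div_of_groundDiagonal_sub_mulVec_eq_zero (hM : M.IsSymm)
    (hoff : ∀ i j, i ≠ j → 0 ≤ M i j) (hpos : ∀ i ∈ rowSupport M, 0 < h i) {x : n → K}
    (hx : (groundDiagonal M h - M) *ᵥ x = 0) {i j : n} (hij : M i j ≠ 0) :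
    x i / h i = x j / h j := by
  have hterm := apply_mul_mul_mul_sq_sub_nonneg hM hoff hpos (x / h)
  have hsum := two_mul_dotProduct_groundDiagonal_sub_mulVec hM (fun i hi => (hpos i hi).ne') x
  rw [hx, dotProduct_zero, mul_zero, eq_comm] at hsum
  have hrow := (Fintype.sum_eq_zero_iff_of_nonneg
    fun i => Finset.sum_nonneg fun j _ => hterm i j).1 hsum
  have hzero : M i j * (h i * h j) * (x i / h i - x j / h j) ^ 2 = 0 :=
    congrFun ((Fintype.sum_eq_zero_iff_of_nonneg (hterm i)).1 (congrFun hrow i)) j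
  have hi : h i ≠ 0 := (hpos i (mem_rowSupport_of_apply_ne_zero hij)).ne'
  have hj : h j ≠ 0 := (hpos j (mem_rowSupport_of_apply_ne_zero (by rwa [hM.apply]))).ne'
  simpa [hij, hi, hj, sub_eq_zero] using hzero

lemma exists_groundDiagonal_sub_mulVec_eq (hM : M.IsSymm) (hoff : ∀ i j, i ≠ j → 0 ≤ M i j)
    (hirr : IsIrreducibleOnSupport M) (hpos : ∀ i ∈ rowSupport M, 0 < h i) {v : n → K}
    (hv : v ⬝ᵥ M *ᵥ h = 0) :
    ∃ u, (groundDiagonal M h - M) *ᵥ u = groundDiagonal M h *ᵥ v := by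
  refine exists_mulVec_eq_of_forall_dotProduct_eq_zero _ fun x hx => ?_
  rw [← mulVec_transpose, (isSymm_groundDiagonal_sub hM).eq] at hx
  obtain ⟨c, hc⟩ := hirr.exists_forall_eq (y := fun i => x i / h i) fun i j =>
    div_eq_div_of_groundDiagonal_sub_mulVec_eq_zero hM hoff hpos hx
  calc x ⬝ᵥ groundDiagonal M h *ᵥ v = ∑ i, c * (v i * (M *ᵥ h) i) := by
        refine Finset.sum_congr rfl fun i _ => ?_
        rw [groundDiagonal_mulVec_apply]
        by_cases hi : i ∈ rowSupport M
        · rw [← hc i hi]; ring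
        · simp [mulVec_apply_eq_zero_of_notMem_rowSupport hi]
    _ = c * (v ⬝ᵥ M *ᵥ h) := (Finset.mul_sum _ _ _).symm
    _ = 0 := by rw [hv, mul_zero]

theorem reverseCauchySchwarz_of_le_sum_mulVec_sq_div (hM : M.IsSymm)
    (hoff : ∀ i j, i ≠ j → 0 ≤ M i j)
    (hirr : IsIrreducibleOnSupport M) (hpos : ∀ i ∈ rowSupport M, 0 < h i ∧ 0 < (M *ᵥ h) i)
    (hle : ∀ u, u ⬝ᵥ M *ᵥ u ≤ ∑ i ∈ rowSupport M, h i * ((M *ᵥ u) i ^ 2 / (M *ᵥ h) i)) :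
    ReverseCauchySchwarz M := by
  have hh := fun i hi => (hpos i hi).1
  refine reverseCauchySchwarz_of_nonpos_of_dotProduct_eq_zero hM (M *ᵥ h) fun v hv => ?_
  obtain ⟨u, hu⟩ := exists_groundDiagonal_sub_mulVec_eq hM hoff hirr hh hv
  refine dotProduct_mulVec_nonpos_of_sub_mulVec_eq hM
    (dotProduct_groundDiagonal_sub_mulVec_nonneg hM hoff hh) (fun x w hxw => ?_) hu
  calc x ⬝ᵥ M *ᵥ x ≤ ∑ i ∈ rowSupport M, h i * ((M *ᵥ x) i ^ 2 / (M *ᵥ h) i) := hle x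
    _ = w ⬝ᵥ groundDiagonal M h *ᵥ w := by
        rw [hxw, sum_mul_groundDiagonal_mulVec_sq_div fun i hi =>
          ⟨(hpos i hi).1.ne', (hpos i hi).2.ne'⟩]

theorem stmt_2_general {m : n → Type*} [∀ i, Fintype (m i)]
    (hM : M.IsSymm) (hoff : ∀ i j, i ≠ j → 0 ≤ M i j)
    (N : ∀ i, Matrix (m i) (m i) K) (T : ∀ i, (n → K) → m i → K)
    (hinh : ∀ i ∈ rowSupport M, ∀ v, (M *ᵥ v) i = T i v ⬝ᵥ N i *ᵥ T i h)
    (hpull : ∀ v, v ⬝ᵥ M *ᵥ v ≤ ∑ i ∈ rowSupport M, h i * (T i v ⬝ᵥ N i *ᵥ T i v))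
    (hirr : IsIrreducibleOnSupport M) (hpos : ∀ i ∈ rowSupport M, 0 < h i ∧ 0 < (M *ᵥ h) i)
    (hhyp : ∀ i ∈ rowSupport M, ReverseCauchySchwarz (N i)) :
    ReverseCauchySchwarz M := by
  refine reverseCauchySchwarz_of_le_sum_mulVec_sq_div hM hoff hirr hpos fun u =>
    (hpull u).trans (Finset.sum_le_sum fun i hi => ?_)
  obtain ⟨hhi, hMhi⟩ := hpos i hi
  refine mul_le_mul_of_nonneg_left ((le_div_iff₀ hMhi).2 ?_) hhi.le
  rw [hinh i hi h] at hMhi ⊢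
  rw [hinh i hi u]
  exact hhyp i hi (T i u) (T i h) hMhi

end GroundState

/-- The local–global principle. -/
theorem stmt_2 {r : ℕ} (hr : 1 ≤ r)
    (M : Matrix (Fin r) (Fin r) ℝ) (hMsymm : M.IsSymm)
    (hMoffdiag : ∀ i j : Fin r, i ≠ j → 0 ≤ M i j)
    (h : Fin r → ℝ) (hh : ∀ i, 0 ≤ h i)
    (Msub : Fin r → Matrix (Fin r) (Fin r) ℝ)
    (hMsubsymm : ∀ i ∈ matrixSupp M, (Msub i).IsSymm)
    (T : Fin r → ((Fin r → ℝ) →ₗ[ℝ] (Fin r → ℝ)))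
    (hInh : ∀ i ∈ matrixSupp M, ∀ v : Fin r → ℝ,
      M.mulVec v i = (T i v) ⬝ᵥ (Msub i).mulVec (T i h))
    (hPull : ∀ v : Fin r → ℝ,
      ∑ i ∈ matrixSupp M, h i * ((T i v) ⬝ᵥ (Msub i).mulVec (T i v)) ≥ v ⬝ᵥ M.mulVec v)
    (hIrr : ∀ S : Finset (Fin r), S.Nonempty → S ⊂ matrixSupp M →
      ∃ i ∈ S, ∃ j ∈ matrixSupp M \ S, M i j ≠ 0)
    (hPos : ∀ i ∈ matrixSupp M, 0 < h i ∧ 0 < M.mulVec h i)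
    (hHyp : ∀ i ∈ matrixSupp M, SatisfiesHyp (Msub i)) :
    SatisfiesHyp M := by
  exact stmt_2_general hMsymm hMoffdiag Msub (fun i => T i) hInh hPull hIrr hPos hHyp
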